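/- arXiv:2603.22957 — 2 statements merged into one kernel-verified Lean document; each statement's English description precedes it below -/
import Mathlib

section
/- Let κ be a composition of k and κ' a decomposition of κ, so that A_κ = ℚ[x_1, …, x_k]^{S_κ} is a subring of A' := A_{κ'} = ℚ[x_1, …, x_k]^{S_{κ'}}. Then Hom_{A_κ}(A', A_κ), the A_κ-linear maps from A' to A_κ, endowed with the A'-module structure (a·f)(x) = f(a·x), is isomorphic to A' as an A'-module. (In other words, A_{κ'} is a Frobenius extension of A_κ.) -/
/-!
Write `G ≥ H` for the two Young subgroups, `R = ℚ[x_1, …, x_k]`, and let `Δ` be the product of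
`x_i - x_j` over the pairs `i < j` lying in the same `G`-block and in different `H`-blocks.
A commutative extension `A ⊆ A'` is Frobenius as soon as there are an `A`-linear form `θ : A' → A`
and finite families `e_s, f_s` in `A'` with `∑ θ (a e_s) f_s = a` for all `a`: injectivity of
`a ↦ θ (a · -)` is immediate, and a linear form `φ` is `θ (c · -)` with `c = ∑ φ (f_s) e_s`.

* The form is `θ f = ∑_{g ∈ G/H} g (f / Δ)`, up to a scalar. To avoid fractions and cosets it is
  obtained as the antisymmetrization over `G` of `f V_H`, divided by `V_G`, where `V_G = Δ V_H` and
  `V_H` are the block Vandermonde products (`frobTrace`). The division is exact because `V_G` is,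
  up to sign, a product of pairwise non-associated primes `x_i - x_j`, each of which divides any
  `G`-antisymmetric polynomial (`vand_dvd`).
* The families come from `D(x, y) = ∏ (x_i - y_j)`, over the pairs `(i, j)` in the same `G`-block
  such that the `H`-block of `i` precedes that of `j` (`diagElt`). This is invariant under `H × H`,
  hence of the form `∑ e_s(x) f_s(y)` with `e_s, f_s ∈ R^H` (`exists_dual_families`). Moreover
  `D(x, x) = Δ`, whereas `D(g x, x) = 0` for `g ∈ G \ H`, since such a `g` moves some `i` to a later
  `H`-block (`relProd_eq_zero`). So only the trivial coset contributes to `∑ θ (a e_s) f_s`, and the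
  sum is `a` up to a nonzero scalar (`sum_frobTrace_mul`).

The Young subgroups enter only through the monotone block functions `b`, `b'` that they preserve.
-/

/-- A composition of `k` is a finite list of positive integers summing to `k`. -/
def IsComposition (k : ℕ) (L : List ℕ) : Prop :=
  (∀ x ∈ L, 0 < x) ∧ L.sum = k

/-- `L'` is a decomposition (refinement) of `L` if it is obtained by concatenating,
in order, a composition of each part of `L`. -/
def IsRefinement (L' L : List ℕ) : Prop :=
  ∃ Ls : List (List ℕ), L' = Ls.flatten ∧ List.Forall₂ (fun t m => IsComposition m t) Ls L

/-- The (0-indexed) index of the block of the composition `L` containing the (0-indexed)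
index `i`: blocks are the consecutive intervals of `{0, …, k−1}` of lengths `k_1, k_2, …`. -/
def blockOf (L : List ℕ) (i : ℕ) : ℕ :=
  ((List.range L.length).filter (fun t => (L.take (t + 1)).sum ≤ i)).length

/-- The Young (parabolic) subgroup `S_κ = S_{k_1} × ⋯ × S_{k_ℓ}` of `S_k` associated with a
composition `κ` of `k`: the permutations preserving each block of consecutive indices. -/
def YoungSubgroup (k : ℕ) (L : List ℕ) : Subgroup (Equiv.Perm (Fin k)) where
  carrier := {σ | ∀ i : Fin k, blockOf L (σ i) = blockOf L i}
  one_mem' := fun _ => rfl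
  mul_mem' := by
    intro σ τ hσ hτ i
    rw [Equiv.Perm.mul_apply, hσ, hτ]
  inv_mem' := by
    intro σ hσ i
    simpa using (hσ (σ⁻¹ i)).symm

/-- The subalgebra of polynomials invariant under a subgroup `G` of `S_k` acting on
`ℚ[x_1, …, x_k]` by permuting variables. -/
noncomputable def fixedSubalgebra (k : ℕ) (G : Subgroup (Equiv.Perm (Fin k))) :
    Subalgebra ℚ (MvPolynomial (Fin k) ℚ) where
  carrier := {P | ∀ σ ∈ G, MvPolynomial.rename (⇑σ) P = P}
  mul_mem' := by
    intro a b ha hb σ hσ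
    rw [map_mul, ha σ hσ, hb σ hσ]
  add_mem' := by
    intro a b ha hb σ hσ
    rw [map_add, ha σ hσ, hb σ hσ]
  algebraMap_mem' := by
    intro r σ hσ
    simp [MvPolynomial.algebraMap_eq]

open MvPolynomial TensorProduct

/-! ### Divisibility by `x_i - x_j` -/

section Divisibility

variable {k : ℕ}

/-- The substitution `x_i ↦ x_j`, whose kernel is the ideal generated by `x_i - x_j`. -/
noncomputable def identify (i j : Fin k) : MvPolynomial (Fin k) ℚ →ₐ[ℚ] MvPolynomial (Fin k) ℚ :=
  rename (Function.update id i j)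

lemma X_sub_X_dvd_iff (i j : Fin k) (P : MvPolynomial (Fin k) ℚ) :
    (X i - X j : MvPolynomial (Fin k) ℚ) ∣ P ↔ identify i j P = 0 := by
  -- Modulo `x_i - x_j` the substitution is the identity.
  have key : ∀ P : MvPolynomial (Fin k) ℚ, (X i - X j : MvPolynomial (Fin k) ℚ) ∣
      P - identify i j P := by
    intro P
    have h : (Ideal.Quotient.mkₐ ℚ (Ideal.span {(X i - X j : MvPolynomial (Fin k) ℚ)})) =
        (Ideal.Quotient.mkₐ ℚ (Ideal.span {(X i - X j : MvPolynomial (Fin k) ℚ)})).comp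
          (identify i j) := by
      apply MvPolynomial.algHom_ext
      intro l
      simp only [AlgHom.comp_apply, identify, rename_X, Function.update_apply, id]
      split_ifs with h
      · subst h
        exact Ideal.Quotient.eq.2 (Ideal.mem_span_singleton_self _)
      · rfl
    exact Ideal.mem_span_singleton.1 (Ideal.Quotient.eq.1 (DFunLike.congr_fun h P))
  constructor
  · rintro ⟨Q, rfl⟩
    have : identify i j (X i - X j) = 0 := by
      simp only [identify, map_sub, rename_X, Function.update_apply, id]
      simp
    rw [map_mul, this, zero_mul]
  · intro h
    simpa [h] using key P

lemma X_sub_X_ne_zero {i j : Fin k} (h : i ≠ j) : (X i - X j : MvPolynomial (Fin k) ℚ) ≠ 0 :=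
  sub_ne_zero.2 fun e => h (X_injective e)

lemma prime_X_sub_X {i j : Fin k} (h : i ≠ j) : Prime (X i - X j : MvPolynomial (Fin k) ℚ) := by
  refine ⟨X_sub_X_ne_zero h, fun hu => ?_, fun P Q hPQ => ?_⟩
  · have h1 := (X_sub_X_dvd_iff i j 1).1 hu.dvd
    simp at h1
  · simpa only [X_sub_X_dvd_iff, map_mul, mul_eq_zero] using hPQ

/-- Ordering both pairs rules out `x_j - x_i`, an associate of `x_i - x_j`. -/
lemma isRelPrime_X_sub_X {i j i' j' : Fin k} (h : i < j) (h' : i' < j')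
    (hne : ¬ (i = i' ∧ j = j')) :
    IsRelPrime (X i - X j : MvPolynomial (Fin k) ℚ) (X i' - X j') := by
  rw [(prime_X_sub_X h.ne).irreducible.isRelPrime_iff_not_dvd, X_sub_X_dvd_iff]
  simp only [identify, map_sub, rename_X, sub_eq_zero]
  intro e
  have := X_injective e
  simp only [Function.update_apply, id] at this
  grind

lemma X_sub_X_dvd_of_swap {i j : Fin k} {P : MvPolynomial (Fin k) ℚ}
    (h : rename (Equiv.swap i j) P = -P) : (X i - X j : MvPolynomial (Fin k) ℚ) ∣ P := by
  rw [X_sub_X_dvd_iff]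
  have h1 : identify i j (rename (Equiv.swap i j) P) = identify i j P := by
    rw [identify, rename_rename]
    congr 1
    congr 1
    funext l
    simp only [Function.comp, Function.update_apply, id, Equiv.swap_apply_def]
    grind
  rw [h, map_neg] at h1
  exact self_eq_neg.1 h1.symm

end Divisibility

/-! ### Block Vandermonde products -/

section Vandermonde

variable {k : ℕ} (b : Fin k → ℕ)

/-- The permutations preserving every fibre of the block function `b`. -/
def blockPerms : Finset (Equiv.Perm (Fin k)) :=
  Finset.univ.filter fun σ => ∀ i, b (σ i) = b i

/-- The factor of the block Vandermonde product at `(i, j)`: `x_i - x_j` inside a block, and a sign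
across blocks. The signs make it antisymmetric in `(i, j)` for all pairs. -/
noncomputable def vandFactor (i j : Fin k) : MvPolynomial (Fin k) ℚ :=
  if b i = b j then X i - X j else if b i < b j then 1 else -1

/-- The product over blocks of the Vandermonde products, up to sign. -/
noncomputable def vand : MvPolynomial (Fin k) ℚ :=
  ∏ j, ∏ i ∈ Finset.Iio j, vandFactor b i j

variable {b}

lemma mem_blockPerms {σ : Equiv.Perm (Fin k)} : σ ∈ blockPerms b ↔ ∀ i, b (σ i) = b i := by
  simp [blockPerms]

lemma sum_blockPerms_mul {M : Type*} [AddCommMonoid M] {τ : Equiv.Perm (Fin k)}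
    (hτ : τ ∈ blockPerms b) (F : Equiv.Perm (Fin k) → M) :
    ∑ σ ∈ blockPerms b, F (τ * σ) = ∑ σ ∈ blockPerms b, F σ := by
  rw [mem_blockPerms] at hτ
  refine Finset.sum_equiv (Equiv.mulLeft τ) (fun σ => ?_) (fun _ _ => rfl)
  simp [mem_blockPerms, hτ]

lemma blockPerms_card_ne_zero : ((blockPerms b).card : ℚ) ≠ 0 := by
  have : (1 : Equiv.Perm (Fin k)) ∈ blockPerms b := by simp [mem_blockPerms]
  exact_mod_cast Finset.card_ne_zero_of_mem this

lemma rename_vand {σ : Equiv.Perm (Fin k)} (hσ : σ ∈ blockPerms b) :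
    rename σ (vand b) = (σ.sign : MvPolynomial (Fin k) ℚ) * vand b := by
  rw [mem_blockPerms] at hσ
  rw [vand, ← Equiv.Perm.prod_Iio_comp_eq_sign_mul_prod]
  · simp only [map_prod]
    refine Finset.prod_congr rfl fun j _ => Finset.prod_congr rfl fun i _ => ?_
    simp only [vandFactor, hσ]
    split_ifs <;> simp
  · intro i j
    simp only [vandFactor]
    rcases lt_trichotomy (b i) (b j) with h | h | h
    · simp [h, h.ne, h.ne', h.not_gt]
    · simp [h]
    · simp [h, h.ne, h.ne', h.not_gt]

lemma vandFactor_ne_zero {i j : Fin k} (h : i ≠ j) : vandFactor b i j ≠ 0 := by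
  unfold vandFactor
  split_ifs
  · exact X_sub_X_ne_zero h
  · simp
  · simp

lemma vand_ne_zero : vand b ≠ 0 :=
  Finset.prod_ne_zero_iff.2 fun _ _ => Finset.prod_ne_zero_iff.2 fun _ hi =>
    vandFactor_ne_zero (Finset.mem_Iio.1 hi).ne

/-- A polynomial that is antisymmetric under the block permutations is divisible by the block
Vandermonde product, because the factors `x_i - x_j` are pairwise non-associated primes. -/
lemma vand_dvd {P : MvPolynomial (Fin k) ℚ}
    (hP : ∀ σ ∈ blockPerms b, rename σ P = (σ.sign : MvPolynomial (Fin k) ℚ) * P) :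
    vand b ∣ P := by
  rw [vand, Finset.prod_sigma']
  apply Finset.prod_dvd_of_isRelPrime
  · rintro ⟨j, i⟩ hij ⟨j', i'⟩ hij' hne
    simp only [Finset.coe_sigma, Set.mem_sigma_iff, Finset.coe_univ, Set.mem_univ, true_and,
      Finset.coe_Iio, Set.mem_Iio] at hij hij'
    simp only [Function.onFun, vandFactor]
    split_ifs
    all_goals first
      | exact isRelPrime_one_left
      | exact isRelPrime_one_right
      | exact isUnit_one.neg.isRelPrime_left
      | exact isUnit_one.neg.isRelPrime_right
      | skip
    refine isRelPrime_X_sub_X hij hij' ?_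
    rintro ⟨rfl, rfl⟩
    exact hne rfl
  · rintro ⟨j, i⟩ hij
    simp only [Finset.mem_sigma, Finset.mem_univ, true_and, Finset.mem_Iio] at hij
    simp only [vandFactor]
    split_ifs with h
    · apply X_sub_X_dvd_of_swap
      rw [hP]
      · simp [Equiv.Perm.sign_swap hij.ne]
      · rw [mem_blockPerms]
        intro l
        rw [Equiv.swap_apply_def]
        grind
    · exact one_dvd _
    · exact isUnit_one.neg.dvd

end Vandermonde

/-! ### The trace form -/

section Trace

variable {k : ℕ} (b b' : Fin k → ℕ)

/-- The antisymmetrization over the block permutations of `b` of `f` times the block Vandermonde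
product of `b'`. -/
noncomputable def antisymmetrize (f : MvPolynomial (Fin k) ℚ) : MvPolynomial (Fin k) ℚ :=
  ∑ σ ∈ blockPerms b, (σ.sign : MvPolynomial (Fin k) ℚ) * rename σ (f * vand b')

lemma rename_antisymm {τ : Equiv.Perm (Fin k)} (hτ : τ ∈ blockPerms b)
    (f : MvPolynomial (Fin k) ℚ) :
    rename τ (antisymmetrize b b' f) = (τ.sign : MvPolynomial (Fin k) ℚ) * antisymmetrize b b' f := by
  simp only [antisymmetrize]
  rw [map_sum, Finset.mul_sum, ← sum_blockPerms_mul hτ fun σ =>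
    (τ.sign : MvPolynomial (Fin k) ℚ) * ((σ.sign : MvPolynomial (Fin k) ℚ) *
      rename σ (f * vand b'))]
  refine Finset.sum_congr rfl fun σ _ => ?_
  rw [map_mul, rename_rename, Equiv.Perm.sign_mul, ← mul_assoc]
  have h : (τ.sign : MvPolynomial (Fin k) ℚ) * (τ.sign : MvPolynomial (Fin k) ℚ) = 1 := by
    rcases Int.units_eq_one_or τ.sign with h | h <;> simp [h]
  congr 1
  rw [Units.val_mul, Int.cast_mul, map_intCast, ← mul_assoc, h, one_mul]

lemma vand_dvd_antisymm (f : MvPolynomial (Fin k) ℚ) : vand b ∣ antisymmetrize b b' f :=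
  vand_dvd fun _ hσ => rename_antisymm _ _ hσ f

/-- The antisymmetrization of `f` divided by the block Vandermonde product of `b`: up to a
scalar, and for `f` invariant under `blockPerms b'`, this is the sum of `g (f / Δ)` over the cosets
of `blockPerms b'` in `blockPerms b`, with `Δ = vand b / vand b'`. -/
noncomputable def frobTrace (f : MvPolynomial (Fin k) ℚ) : MvPolynomial (Fin k) ℚ :=
  (vand_dvd_antisymm b b' f).choose

lemma vand_mul_frobTrace (f : MvPolynomial (Fin k) ℚ) :
    vand b * frobTrace b b' f = antisymmetrize b b' f :=
  (vand_dvd_antisymm b b' f).choose_spec.symm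

lemma frobTrace_add (f g : MvPolynomial (Fin k) ℚ) :
    frobTrace b b' (f + g) = frobTrace b b' f + frobTrace b b' g := by
  apply mul_left_cancel₀ (vand_ne_zero (b := b))
  rw [mul_add]
  simp only [vand_mul_frobTrace, antisymmetrize, add_mul, map_add, mul_add, Finset.sum_add_distrib]

lemma frobTrace_mul {a : MvPolynomial (Fin k) ℚ} (ha : ∀ σ ∈ blockPerms b, rename σ a = a)
    (f : MvPolynomial (Fin k) ℚ) : frobTrace b b' (a * f) = a * frobTrace b b' f := by
  apply mul_left_cancel₀ (vand_ne_zero (b := b))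
  rw [mul_left_comm]
  simp only [vand_mul_frobTrace, antisymmetrize, Finset.mul_sum]
  refine Finset.sum_congr rfl fun σ hσ => ?_
  rw [mul_assoc a, map_mul _ a, ha σ hσ]
  ring

lemma rename_frobTrace {τ : Equiv.Perm (Fin k)} (hτ : τ ∈ blockPerms b)
    (f : MvPolynomial (Fin k) ℚ) : rename τ (frobTrace b b' f) = frobTrace b b' f := by
  have h := rename_antisymm b b' hτ f
  rw [← vand_mul_frobTrace, map_mul, rename_vand hτ, mul_assoc] at h
  have hs : (τ.sign : MvPolynomial (Fin k) ℚ) ≠ 0 := by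
    rcases Int.units_eq_one_or τ.sign with h | h <;> simp [h]
  exact mul_left_cancel₀ (vand_ne_zero (b := b)) (mul_left_cancel₀ hs h)

end Trace

/-! ### The diagonal element and its invariant decomposition -/

section Diagonal

variable {k : ℕ} (b b' : Fin k → ℕ)

/-- The product of `F i j` over the relative pairs: the `(i, j)` in the same block of `b` such that
the block of `i` for `b'` precedes that of `j`. -/
def relProd {M : Type*} [CommMonoid M] (F : Fin k → Fin k → M) : M :=
  ∏ j, ∏ i, if b i = b j ∧ b' i < b' j then F i j else 1

variable {b b'}

lemma map_relProd {M N F : Type*} [CommMonoid M] [CommMonoid N] [FunLike F M N]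
    [MonoidHomClass F M N] (φ : F) (f : Fin k → Fin k → M) :
    φ (relProd b b' f) = relProd b b' fun i j => φ (f i j) := by
  simp only [relProd, map_prod, apply_ite φ, map_one]

lemma relProd_comp {M : Type*} [CommMonoid M] (hbb : ∀ σ ∈ blockPerms b', σ ∈ blockPerms b)
    {σ τ : Equiv.Perm (Fin k)} (hσ : σ ∈ blockPerms b') (hτ : τ ∈ blockPerms b')
    (F : Fin k → Fin k → M) :
    relProd b b' (fun i j => F (σ i) (τ j)) = relProd b b' F := by
  have hσ' := mem_blockPerms.1 (hbb σ hσ)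
  have hτ' := mem_blockPerms.1 (hbb τ hτ)
  rw [mem_blockPerms] at hσ hτ
  simp only [relProd]
  rw [← Equiv.prod_comp τ fun j => ∏ i, if b i = b j ∧ b' i < b' j then F i j else 1]
  refine Finset.prod_congr rfl fun j _ => ?_
  rw [← Equiv.prod_comp σ fun i => if b i = b (τ j) ∧ b' i < b' (τ j) then F i (τ j) else 1]
  simp only [hσ', hτ', hσ, hτ]

/-- The block Vandermonde product of `b` factors through that of the finer `b'`; monotonicity of
the block functions makes the signs across blocks agree. -/
lemma vand_eq (hmono : Monotone b) (hmono' : Monotone b') (hbb : ∀ i j, b' i = b' j → b i = b j) :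
    vand b = vand b' * relProd b b' fun i j => (X i - X j : MvPolynomial (Fin k) ℚ) := by
  rw [vand, vand, relProd, ← Finset.prod_mul_distrib]
  refine Finset.prod_congr rfl fun j _ => ?_
  -- By monotonicity of `b'`, only the pairs with `i < j` contribute to the relative product.
  rw [← Finset.prod_subset (Finset.subset_univ (Finset.Iio j)), ← Finset.prod_mul_distrib]
  · refine Finset.prod_congr rfl fun i hi => ?_
    have hij := (Finset.mem_Iio.1 hi).le
    rcases (hmono' hij).eq_or_lt with h | h
    · simp [vandFactor, h, hbb i j h]
    · rcases (hmono hij).eq_or_lt with h1 | h1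
      · simp [vandFactor, h, h.ne, h1]
      · simp [vandFactor, h, h.ne, h1, h1.ne]
  · intro i _ hi
    rw [if_neg]
    rintro ⟨-, h⟩
    exact h.not_ge (hmono' (not_lt.1 fun hlt => hi (Finset.mem_Iio.2 hlt)))

/-- The product of `x_i - y_j` over the relative pairs vanishes at `(x, y) = (g x, x)` when `g` lies
outside the smaller Young subgroup: such a `g` moves some `i` to a later block of `b'`. -/
lemma relProd_eq_zero {g : Equiv.Perm (Fin k)} (hg : g ∈ blockPerms b) (hg' : g ∉ blockPerms b') :
    relProd b b' (fun i j => (X (g i) - X j : MvPolynomial (Fin k) ℚ)) = 0 := by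
  rw [mem_blockPerms] at hg hg'
  obtain ⟨i, hi⟩ : ∃ i, b' i < b' (g i) := by
    by_contra! h
    refine hg' fun i => ?_
    exact (Finset.sum_eq_sum_iff_of_le fun i _ => h i).1 (Equiv.sum_comp g b') i (Finset.mem_univ i)
  refine Finset.prod_eq_zero (Finset.mem_univ (g i)) (Finset.prod_eq_zero (Finset.mem_univ i) ?_)
  simp [hg, hi]

variable (b' b)

/-- The product of `x_i - y_j` over the relative pairs, in `ℚ[x] ⊗ ℚ[y]`. -/
noncomputable def diagElt : MvPolynomial (Fin k) ℚ ⊗[ℚ] MvPolynomial (Fin k) ℚ :=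
  relProd b b' fun i j => X i ⊗ₜ 1 - 1 ⊗ₜ X j

variable {b b'}

lemma map_diagElt (hbb : ∀ σ ∈ blockPerms b', σ ∈ blockPerms b)
    {σ τ : Equiv.Perm (Fin k)} (hσ : σ ∈ blockPerms b') (hτ : τ ∈ blockPerms b') :
    Algebra.TensorProduct.map (rename (R := ℚ) σ) (rename (R := ℚ) τ) (diagElt b b') =
      diagElt b b' := by
  rw [diagElt, map_relProd, ← relProd_comp hbb hσ hτ fun i j =>
    (X i ⊗ₜ 1 - 1 ⊗ₜ X j : MvPolynomial (Fin k) ℚ ⊗[ℚ] MvPolynomial (Fin k) ℚ)]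
  simp

lemma lmul_diagElt (g : Equiv.Perm (Fin k)) :
    Algebra.TensorProduct.lmul' ℚ (Algebra.TensorProduct.map (rename (R := ℚ) g)
      (AlgHom.id ℚ (MvPolynomial (Fin k) ℚ)) (diagElt b b')) =
      relProd b b' (fun i j => (X (g i) - X j : MvPolynomial (Fin k) ℚ)) := by
  rw [diagElt, map_relProd, map_relProd]
  simp

/-- The sum of the transforms of `p` under the block permutations. -/
noncomputable def orbitSum (b : Fin k → ℕ) (p : MvPolynomial (Fin k) ℚ) : MvPolynomial (Fin k) ℚ :=
  ∑ σ ∈ blockPerms b, rename σ p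

lemma rename_orbitSum {τ : Equiv.Perm (Fin k)} (hτ : τ ∈ blockPerms b)
    (p : MvPolynomial (Fin k) ℚ) : rename τ (orbitSum b p) = orbitSum b p := by
  simp only [orbitSum, map_sum, rename_rename]
  exact sum_blockPerms_mul hτ fun σ => rename σ p

/-- Since `diagElt` is invariant under the smaller Young subgroup in each tensor factor
separately, a decomposition of it into pure tensors can be averaged to make all the factors
invariant. -/
lemma exists_dual_families (hbb : ∀ σ ∈ blockPerms b', σ ∈ blockPerms b) :
    ∃ S : Finset (MvPolynomial (Fin k) ℚ × MvPolynomial (Fin k) ℚ),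
      ∀ g : Equiv.Perm (Fin k), ∑ s ∈ S, rename g (orbitSum b' s.1) * orbitSum b' s.2 =
        C (((blockPerms b').card : ℚ) ^ 2) *
          relProd b b' (fun i j => (X (g i) - X j : MvPolynomial (Fin k) ℚ)) := by
  obtain ⟨S, hS⟩ := TensorProduct.exists_finset (diagElt b b')
  refine ⟨S, fun g => ?_⟩
  have h : ∑ s ∈ S, orbitSum b' s.1 ⊗ₜ[ℚ] orbitSum b' s.2 =
      (((blockPerms b').card : ℚ) ^ 2) • diagElt b b' := by
    calc ∑ s ∈ S, orbitSum b' s.1 ⊗ₜ[ℚ] orbitSum b' s.2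
        = ∑ σ ∈ blockPerms b', ∑ τ ∈ blockPerms b', Algebra.TensorProduct.map (rename (R := ℚ) σ)
            (rename (R := ℚ) τ) (diagElt b b') := by
          simp only [hS, map_sum, Algebra.TensorProduct.map_tmul, orbitSum, sum_tmul, tmul_sum]
          rw [Finset.sum_comm]
          simp_rw [Finset.sum_comm (s := S)]
          rw [Finset.sum_comm]
      _ = ∑ σ ∈ blockPerms b', ∑ τ ∈ blockPerms b', diagElt b b' :=
          Finset.sum_congr rfl fun σ hσ => Finset.sum_congr rfl fun τ hτ => map_diagElt hbb hσ hτ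
      _ = _ := by
          simp only [Finset.sum_const, smul_smul, ← Nat.cast_smul_eq_nsmul ℚ, sq]
  have h2 := congrArg (fun z => Algebra.TensorProduct.lmul' ℚ (Algebra.TensorProduct.map
    (rename (R := ℚ) g) (AlgHom.id ℚ (MvPolynomial (Fin k) ℚ)) z)) h
  simpa [lmul_diagElt, smul_eq_C_mul] using h2

end Diagonal

/-! ### The Frobenius form -/

/-- The families of `exists_dual_families` are dual families for the trace form, up to a nonzero
scalar. -/
lemma sum_frobTrace_mul {k : ℕ} {b b' : Fin k → ℕ} (hmono : Monotone b) (hmono' : Monotone b')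
    (hbb : ∀ i j, b' i = b' j → b i = b j) :
    ∃ S : Finset (MvPolynomial (Fin k) ℚ × MvPolynomial (Fin k) ℚ),
      ∀ a, (∀ σ ∈ blockPerms b', rename σ a = a) →
        ∑ s ∈ S, frobTrace b b' (a * orbitSum b' s.1) * orbitSum b' s.2 =
          C (((blockPerms b').card : ℚ) ^ 3) * a := by
  have hsub : ∀ σ ∈ blockPerms b', σ ∈ blockPerms b := fun σ hσ =>
    mem_blockPerms.2 fun i => hbb _ _ (mem_blockPerms.1 hσ i)
  obtain ⟨S, hS⟩ := exists_dual_families hsub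
  refine ⟨S, fun a ha => ?_⟩
  apply mul_left_cancel₀ (vand_ne_zero (b := b))
  have hone : (1 : Equiv.Perm (Fin k)) ∈ blockPerms b' := by simp [mem_blockPerms]
  calc vand b * ∑ s ∈ S, frobTrace b b' (a * orbitSum b' s.1) * orbitSum b' s.2
      = ∑ g ∈ blockPerms b, (g.sign : MvPolynomial (Fin k) ℚ) * rename g (a * vand b') *
          ∑ s ∈ S, rename g (orbitSum b' s.1) * orbitSum b' s.2 := by
        simp only [Finset.mul_sum, ← mul_assoc, vand_mul_frobTrace]
        simp only [antisymmetrize, Finset.sum_mul]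
        rw [Finset.sum_comm]
        refine Finset.sum_congr rfl fun g _ => Finset.sum_congr rfl fun s _ => ?_
        simp only [map_mul]
        ring
    _ = ∑ g ∈ blockPerms b', (g.sign : MvPolynomial (Fin k) ℚ) * rename g (a * vand b') *
          ∑ s ∈ S, rename g (orbitSum b' s.1) * orbitSum b' s.2 := by
        symm
        refine Finset.sum_subset hsub fun g hg hg' => ?_
        rw [hS, relProd_eq_zero hg hg', mul_zero, mul_zero]
    _ = ∑ g ∈ blockPerms b', C (((blockPerms b').card : ℚ) ^ 2) * (vand b * a) := by
        refine Finset.sum_congr rfl fun g hg => ?_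
        have hsg : (g.sign : MvPolynomial (Fin k) ℚ) * (g.sign : MvPolynomial (Fin k) ℚ) = 1 := by
          rcases Int.units_eq_one_or g.sign with h | h <;> simp [h]
        rw [hS, map_mul, ha g hg, rename_vand hg, vand_eq hmono hmono' hbb,
          ← relProd_comp hsub hg hone (fun i j => (X i - X j : MvPolynomial _ ℚ))]
        simp only [Equiv.Perm.one_apply]
        linear_combination (C (((blockPerms b').card : ℚ) ^ 2) * a * vand b' *
          relProd b b' fun i j => (X (g i) - X j : MvPolynomial (Fin k) ℚ)) * hsg
    _ = _ := by
        rw [Finset.sum_const, nsmul_eq_mul]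
        simp only [map_pow, map_natCast]
        ring

/-- The trace form is a Frobenius form for the subalgebras of invariants of the permutations
preserving `b`, respectively `b'`. -/
lemma exists_frobenius_form {k : ℕ} {b b' : Fin k → ℕ} (hmono : Monotone b) (hmono' : Monotone b')
    (hbb : ∀ i j, b' i = b' j → b i = b j) (A A' : Subalgebra ℚ (MvPolynomial (Fin k) ℚ))
    [Algebra A A'] (hcoe : ∀ a : A, (algebraMap A A' a : MvPolynomial (Fin k) ℚ) = a)
    (memA : ∀ P, P ∈ A ↔ ∀ σ ∈ blockPerms b, rename σ P = P)
    (memA' : ∀ P, P ∈ A' ↔ ∀ σ ∈ blockPerms b', rename σ P = P) :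
    ∃ θ : A' →ₗ[A] A, Function.Bijective fun a : A' => θ ∘ₗ LinearMap.mulLeft A a := by
  have smul_coe : ∀ (a : A) (x : A'), ((a • x : A') : MvPolynomial (Fin k) ℚ) = a * x :=
    fun a x => by rw [Algebra.smul_def, MulMemClass.coe_mul, hcoe]
  obtain ⟨S, hS⟩ := sum_frobTrace_mul hmono hmono' hbb
  let t : A' → A := fun f =>
    ⟨frobTrace b b' f, (memA _).2 fun σ hσ => rename_frobTrace b b' hσ _⟩
  have t_coe : ∀ f : A', (t f : MvPolynomial (Fin k) ℚ) = frobTrace b b' f := fun f => rfl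
  have t_add : ∀ f g, t (f + g) = t f + t g := by
    intro f g
    apply Subtype.ext
    rw [AddMemClass.coe_add, t_coe, t_coe, t_coe, AddMemClass.coe_add, frobTrace_add]
  have t_smul : ∀ (a : A) (f : A'), t (a • f) = a * t f := by
    intro a f
    apply Subtype.ext
    rw [MulMemClass.coe_mul, t_coe, t_coe, smul_coe, frobTrace_mul b b' ((memA _).1 a.2)]
  let θ : A' →ₗ[A] A := { toFun := t, map_add' := t_add, map_smul' := t_smul }
  have θ_coe : ∀ f : A', (θ f : MvPolynomial (Fin k) ℚ) = frobTrace b b' f := t_coe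
  let o : MvPolynomial (Fin k) ℚ → A' := fun p =>
    ⟨orbitSum b' p, (memA' _).2 fun σ hσ => rename_orbitSum hσ p⟩
  set c : ℚ := (((blockPerms b').card : ℚ) ^ 3)⁻¹ with hc
  have hc0 : (((blockPerms b').card : ℚ) ^ 3) ≠ 0 := pow_ne_zero _ blockPerms_card_ne_zero
  have hCc : (C c * C (((blockPerms b').card : ℚ) ^ 3) : MvPolynomial (Fin k) ℚ) = 1 := by
    rw [← C_mul, hc, inv_mul_cancel₀ hc0, C_1]
  let cA : A := algebraMap ℚ A c
  have cA_coe : (cA : MvPolynomial (Fin k) ℚ) = C c := rfl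
  -- Every `a` is recovered from the values of the form `θ (a * ·)`.
  have expand : ∀ a : A', ∑ s ∈ S, (cA * θ (a * o s.1)) • o s.2 = a := by
    intro a
    apply Subtype.ext
    rw [AddSubmonoidClass.coe_finsetSum]
    simp only [smul_coe, MulMemClass.coe_mul, θ_coe, cA_coe, mul_assoc]
    rw [← Finset.mul_sum, hS a ((memA' _).1 a.2), ← mul_assoc, hCc, one_mul]
  refine ⟨θ, fun a₁ a₂ h => ?_, fun φ => ?_⟩
  · have h' : ∀ x, θ (a₁ * x) = θ (a₂ * x) := fun x => LinearMap.congr_fun h x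
    rw [← expand a₁, ← expand a₂]
    simp only [h']
  · refine ⟨∑ s ∈ S, (cA * φ (o s.2)) • o s.1, LinearMap.ext fun x => ?_⟩
    change θ ((∑ s ∈ S, (cA * φ (o s.2)) • o s.1) * x) = φ x
    conv_rhs => rw [← expand x]
    rw [Finset.sum_mul, map_sum, map_sum]
    refine Finset.sum_congr rfl fun s _ => ?_
    rw [smul_mul_assoc, map_smul, map_smul, smul_eq_mul, smul_eq_mul, mul_comm (o s.1) x]
    ring

/-! ### Blocks of compositions -/

lemma blockOf_mono (L : List ℕ) : Monotone (blockOf L) := by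
  intro i j hij
  refine (List.monotone_filter_right _ fun t ht => ?_).length_le
  simp only [decide_eq_true_eq] at ht ⊢
  omega

/-- An inclusion of invariant rings makes the blocks of `L'` finer than those of `L`: the
linear polynomial whose coefficients are the block indices of `L` is invariant. -/
lemma blockOf_eq_of_le {k : ℕ} {L L' : List ℕ}
    (hAA : fixedSubalgebra k (YoungSubgroup k L) ≤ fixedSubalgebra k (YoungSubgroup k L'))
    (i j : Fin k) (h : blockOf L' i = blockOf L' j) : blockOf L i = blockOf L j := by
  have hG : (∑ l : Fin k, C (blockOf L l : ℚ) * X l : MvPolynomial (Fin k) ℚ) ∈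
      fixedSubalgebra k (YoungSubgroup k L) := by
    intro σ hσ
    simp only [map_sum, map_mul, rename_C, rename_X]
    rw [← Equiv.sum_comp σ (fun l => C (blockOf L l : ℚ) * X l)]
    exact Finset.sum_congr rfl fun l _ => by rw [hσ l]
  have hswap : Equiv.swap i j ∈ YoungSubgroup k L' := by
    intro l
    rw [Equiv.swap_apply_def]
    split_ifs <;> simp_all
  -- Comparing the coefficients of `x_i` after the transposition `(i j)`.
  have h1 := congrArg (coeff (Finsupp.single i 1)) (hAA hG _ hswap)
  simp only [map_sum, map_mul, rename_C, rename_X, coeff_sum, coeff_C_mul, coeff_X] at h1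
  simp [Finsupp.single_left_inj, Equiv.swap_apply_eq_iff] at h1
  exact h1.symm

set_option synthInstance.maxHeartbeats 1000000 in
set_option maxHeartbeats 2000000 in
/-- For `κ'` a decomposition of `κ`, with `A = A_κ ⊆ A' = A_{κ'}`, the `A'`-module
`Hom_A(A', A)` (with action `(a·f)(x) = f(a·x)`) is isomorphic to `A'`; equivalently,
there is an `A`-linear form `θ : A' → A` such that `a ↦ θ(a · –)` is a bijection from
`A'` to `Hom_A(A', A)` (i.e. `A'` is a Frobenius extension of `A`). -/
theorem invariants_frobenius_extension (k : ℕ) (hk : 0 < k) (L L' : List ℕ)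
    (hL : IsComposition k L) (href : IsRefinement L' L)
    (hAA : fixedSubalgebra k (YoungSubgroup k L) ≤ fixedSubalgebra k (YoungSubgroup k L')) :
    letI : Algebra ↥(fixedSubalgebra k (YoungSubgroup k L))
        ↥(fixedSubalgebra k (YoungSubgroup k L')) :=
      ((Subalgebra.inclusion hAA).toRingHom).toAlgebra
    ∃ θ : ↥(fixedSubalgebra k (YoungSubgroup k L')) →ₗ[↥(fixedSubalgebra k (YoungSubgroup k L))]
        ↥(fixedSubalgebra k (YoungSubgroup k L)),
      Function.Bijective
        (fun a : ↥(fixedSubalgebra k (YoungSubgroup k L')) =>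
          θ ∘ₗ LinearMap.mulLeft ↥(fixedSubalgebra k (YoungSubgroup k L)) a) := by
  let _ : Algebra ↥(fixedSubalgebra k (YoungSubgroup k L))
      ↥(fixedSubalgebra k (YoungSubgroup k L')) :=
    ((Subalgebra.inclusion hAA).toRingHom).toAlgebra
  exact exists_frobenius_form (b := fun i => blockOf L i) (b' := fun i => blockOf L' i)
    (fun i j hij => blockOf_mono L hij) (fun i j hij => blockOf_mono L' hij)
    (blockOf_eq_of_le hAA) _ _ (fun _ => rfl)
    (fun P => forall_congr' fun σ => by rw [mem_blockPerms]; rfl)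
    (fun P => forall_congr' fun σ => by rw [mem_blockPerms]; rfl)
end

section
/- Let a, b be positive integers, let P ∈ ℚ[y_1, …, y_a] be a symmetric polynomial in a variables and let Q ∈ ℚ[z_1, …, z_b] be a symmetric polynomial in b variables. In the field of rational functions ℚ(x_1, …, x_{a+b}), consider the element R = ∑ P(x_I) · Q(x_J) / ∏_{i ∈ I, j ∈ J} (x_i − x_j), where the sum runs over all ordered pairs (I, J) of disjoint subsets with I ⊔ J = {1, …, a+b}, #I = a, #J = b, and P(x_I) (resp. Q(x_J)) denotes P (resp. Q) evaluated at the variables x_i with i ∈ I (resp. i ∈ J), in any order. Then R is a polynomial, and moreover a symmetric polynomial in x_1, …, x_{a+b} (i.e. R lies in the image of ℚ[x_1, …, x_{a+b}]^{S_{a+b}} in the fraction field). -/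
/-!
Write `Δ` for the Vandermonde determinant of the variables. It is alternating, hence divisible by
every `x_i - x_j` with `i ≠ j` (`sub_dvd_of_swap`), and since these are pairwise non-associated
primes, each denominator `∏_{i ∈ I, j ∉ I} (x_i - x_j)` divides `Δ` (`prod_sub_dvd`). So
`N = Δ R` is a polynomial.

A permutation `σ` of the variables carries the summand of `I` to the summand of `σ I`
(`rename_evalOnSubset`, which is where the symmetry of `P` and `Q` enters), so `N` is alternating
like `Δ`. By the same divisibility facts `Δ ∣ N`, and the quotient `R = N / Δ` of two alternating
polynomials is a symmetric polynomial.
-/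

/-- Evaluation of a symmetric polynomial `P` in `m` variables at the variables `x_i`,
`i ∈ I`, for a subset `I` of cardinality `m` of the variables (taken in increasing
order, which is irrelevant for symmetric `P`). -/
noncomputable def evalOnSubset (n m : ℕ) (I : Finset (Fin n)) (h : I.card = m)
    (P : MvPolynomial (Fin m) ℚ) : MvPolynomial (Fin n) ℚ :=
  MvPolynomial.aeval (fun t : Fin m => MvPolynomial.X ((I.orderIsoOfFin h t : I) : Fin n)) P

open MvPolynomial in
/-- `X i - X j` generates the kernel of the substitution `X i ↦ X j`. -/
lemma sub_dvd_iff {n : ℕ} (i j : Fin n) (f : MvPolynomial (Fin n) ℚ) :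
    (X i - X j : MvPolynomial (Fin n) ℚ) ∣ f ↔ rename (Function.update id i j) f = 0 := by
  constructor
  · rintro ⟨g, rfl⟩
    rcases eq_or_ne i j with rfl | h
    · simp
    · simp [Function.update_of_ne h.symm]
  · intro h
    have key : (X i - X j : MvPolynomial (Fin n) ℚ) ∣ f - rename (Function.update id i j) f := by
      clear h
      induction f using MvPolynomial.induction_on with
      | C c => simp
      | add p q hp hq =>
        rw [map_add, add_sub_add_comm]
        exact dvd_add hp hq
      | mul_X p k hp =>
        have hk : (X i - X j : MvPolynomial (Fin n) ℚ) ∣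
            X k - X (Function.update id i j k) := by
          rcases eq_or_ne k i with rfl | h
          · simp
          · simp [Function.update_of_ne h]
        rw [map_mul, rename_X]
        exact dvd_mul_sub_mul hp hk
    rwa [h, sub_zero] at key

open MvPolynomial in
lemma prime_sub {n : ℕ} {i j : Fin n} (h : i ≠ j) :
    Prime (X i - X j : MvPolynomial (Fin n) ℚ) := by
  refine ⟨sub_ne_zero.2 fun e => h (X_injective e), fun hu => ?_, fun f g hfg => ?_⟩
  · have := (sub_dvd_iff i j 1).1 hu.dvd
    simp at this
  · rw [sub_dvd_iff] at hfg ⊢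
    rw [sub_dvd_iff]
    rwa [map_mul, mul_eq_zero] at hfg

open MvPolynomial in
lemma isRelPrime_sub {n : ℕ} {i j k l : Fin n} (hij : i ≠ j) (hkl : k ≠ l)
    (h₁ : ¬(i = k ∧ j = l)) (h₂ : ¬(i = l ∧ j = k)) :
    IsRelPrime (X i - X j : MvPolynomial (Fin n) ℚ) (X k - X l) := by
  rw [(prime_sub hij).irreducible.isRelPrime_iff_not_dvd, sub_dvd_iff]
  simp only [map_sub, rename_X, sub_eq_zero]
  intro e
  have e := X_injective e
  simp only [Function.update_apply, id] at e
  split_ifs at e <;> grind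

open MvPolynomial in
/-- Common multiples of the differences `X (u p) - X (v p)` are multiples of their product, as long
as no unordered pair of variables occurs twice. -/
lemma prod_sub_dvd {n : ℕ} {ι : Type*} (s : Finset ι) (u v : ι → Fin n)
    (hne : ∀ p ∈ s, u p ≠ v p)
    (hs : ∀ p ∈ s, ∀ q ∈ s, p ≠ q → ¬(u p = u q ∧ v p = v q) ∧ ¬(u p = v q ∧ v p = u q))
    (f : MvPolynomial (Fin n) ℚ) (hf : ∀ p ∈ s, (X (u p) - X (v p)) ∣ f) :
    ∏ p ∈ s, (X (u p) - X (v p)) ∣ f :=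
  Finset.prod_dvd_of_isRelPrime
    (fun p hp q hq hpq => isRelPrime_sub (hne p hp) (hne q hq) (hs p hp q hq hpq).1
      (hs p hp q hq hpq).2) hf

open MvPolynomial in
/-- After setting `x_i = x_j` the two sides of `hf` give `f = -f`, so `f` vanishes there. -/
lemma sub_dvd_of_swap {n : ℕ} {i j : Fin n} (f : MvPolynomial (Fin n) ℚ)
    (hf : rename (Equiv.swap i j) f = -f) : (X i - X j) ∣ f := by
  rw [sub_dvd_iff]
  have hc : Function.update id i j ∘ Equiv.swap i j = Function.update id i j := by
    funext k
    simp only [Function.comp, Function.update_apply, id, Equiv.swap_apply_def]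
    grind
  have h := congrArg (rename (Function.update id i j)) hf
  rw [rename_rename, hc, map_neg] at h
  exact self_eq_neg.1 h

open MvPolynomial in
/-- The Vandermonde determinant of the variables. -/
noncomputable def vdm (n : ℕ) : MvPolynomial (Fin n) ℚ :=
  (Matrix.vandermonde (fun i : Fin n => (X i : MvPolynomial (Fin n) ℚ))).det

open MvPolynomial in
/-- The sign of a permutation, as a constant polynomial. -/
noncomputable def sgn {n : ℕ} (σ : Equiv.Perm (Fin n)) : MvPolynomial (Fin n) ℚ :=
  ((Equiv.Perm.sign σ : ℤ) : MvPolynomial (Fin n) ℚ)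

lemma sgn_ne_zero {n : ℕ} (σ : Equiv.Perm (Fin n)) : sgn σ ≠ 0 := by
  rcases Int.units_eq_one_or (Equiv.Perm.sign σ) with h | h <;> simp [sgn, h]

lemma sgn_swap {n : ℕ} {i j : Fin n} (h : i ≠ j) : sgn (Equiv.swap i j) = -1 := by
  simp [sgn, Equiv.Perm.sign_swap h]

open MvPolynomial in
lemma rename_vdm {n : ℕ} (σ : Equiv.Perm (Fin n)) : rename σ (vdm n) = sgn σ * vdm n := by
  rw [vdm, AlgHom.map_det, sgn, ← Matrix.det_permute]
  congr 1
  ext1 i j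
  simp [Matrix.vandermonde_apply]

lemma vdm_ne_zero (n : ℕ) : vdm n ≠ 0 :=
  Matrix.det_vandermonde_ne_zero_iff.2 (MvPolynomial.X_injective)

open MvPolynomial in
/-- An alternating polynomial is the Vandermonde determinant times a symmetric polynomial. -/
lemma exists_symmetric_of_alternating {n : ℕ} (f : MvPolynomial (Fin n) ℚ)
    (hf : ∀ σ : Equiv.Perm (Fin n), rename σ f = sgn σ * f) :
    ∃ S : MvPolynomial (Fin n) ℚ, S.IsSymmetric ∧ f = vdm n * S := by
  have hdvd : vdm n ∣ f := by
    rw [vdm, Matrix.det_vandermonde, Finset.prod_sigma']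
    refine prod_sub_dvd (Finset.univ.sigma fun i : Fin n => Finset.Ioi i) (fun p => p.2)
      (fun p => p.1) ?_ ?_ f ?_
    · rintro ⟨i, j⟩ hp
      simp only [Finset.mem_sigma, Finset.mem_Ioi] at hp
      exact hp.2.ne'
    · rintro ⟨i, j⟩ hp ⟨k, l⟩ hq hne
      simp only [Finset.mem_sigma, Finset.mem_Ioi] at hp hq
      refine ⟨?_, ?_⟩
      · rintro ⟨rfl, rfl⟩
        exact hne rfl
      · rintro ⟨h₁, h₂⟩
        simp only at h₁ h₂
        subst h₁ h₂
        exact lt_asymm hp.2 hq.2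
    · rintro ⟨i, j⟩ hp
      simp only [Finset.mem_sigma, Finset.mem_Ioi] at hp
      apply sub_dvd_of_swap
      rw [hf, sgn_swap hp.2.ne', neg_one_mul]
  obtain ⟨S, rfl⟩ := hdvd
  refine ⟨S, fun σ => ?_, rfl⟩
  have h := hf σ
  rw [map_mul, rename_vdm, mul_assoc] at h
  exact mul_left_cancel₀ (vdm_ne_zero n) (mul_left_cancel₀ (sgn_ne_zero σ) h)

open MvPolynomial in
/-- For symmetric `P`, any enumeration `v` of `I` may replace the increasing one. -/
lemma evalOnSubset_eq_rename {n m : ℕ} (I : Finset (Fin n)) (h : I.card = m)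
    (P : MvPolynomial (Fin m) ℚ) (hP : P.IsSymmetric) (v : Fin m → Fin n)
    (hv : Function.Injective v) (hvI : ∀ t, v t ∈ I) :
    evalOnSubset n m I h P = rename v P := by
  let π : Equiv.Perm (Fin m) := Equiv.ofBijective
    (fun t => (I.orderIsoOfFin h).symm ⟨v t, hvI t⟩)
    (Finite.injective_iff_bijective.1 fun s t hst => hv (by simpa using hst))
  have hπ : v = (fun t : Fin m => ((I.orderIsoOfFin h t : I) : Fin n)) ∘ π := by
    funext t
    simp only [Function.comp, π, Equiv.ofBijective_apply, OrderIso.apply_symm_apply]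
  rw [hπ, ← rename_rename, hP π]
  refine DFunLike.congr_fun (?_ : aeval _ = rename _) P
  exact algHom_ext fun t => by simp

open MvPolynomial in
lemma rename_evalOnSubset {n m : ℕ} (σ : Equiv.Perm (Fin n)) (I J : Finset (Fin n))
    (hI : I.card = m) (hJ : J.card = m) (hIJ : ∀ i ∈ I, σ i ∈ J)
    (P : MvPolynomial (Fin m) ℚ) (hP : P.IsSymmetric) :
    rename σ (evalOnSubset n m I hI P) = evalOnSubset n m J hJ P := by
  have hinj : Function.Injective (fun t : Fin m => ((I.orderIsoOfFin hI t : I) : Fin n)) :=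
    Subtype.val_injective.comp (I.orderIsoOfFin hI).injective
  rw [evalOnSubset_eq_rename I hI P hP _ hinj fun t => Subtype.prop _, rename_rename,
    evalOnSubset_eq_rename J hJ P hP _ (σ.injective.comp hinj)
      fun t => hIJ _ (Subtype.prop _)]

open MvPolynomial in
/-- The denominator `∏_{i ∈ I, j ∉ I} (x_i - x_j)`. -/
noncomputable def denom {n : ℕ} (I : Finset (Fin n)) : MvPolynomial (Fin n) ℚ :=
  ∏ i ∈ I, ∏ j ∈ Iᶜ, (X i - X j)

lemma denom_dvd_vdm {n : ℕ} (I : Finset (Fin n)) : denom I ∣ vdm n := by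
  rw [denom, ← Finset.prod_product']
  have hne : ∀ p ∈ I ×ˢ Iᶜ, p.1 ≠ p.2 := by
    rintro ⟨i, j⟩ hp h
    simp only [Finset.mem_product, Finset.mem_compl] at hp h
    exact hp.2 (h ▸ hp.1)
  refine prod_sub_dvd _ Prod.fst Prod.snd hne ?_ _ ?_
  · rintro ⟨i, j⟩ hp ⟨k, l⟩ hq hpq
    simp only [Finset.mem_product, Finset.mem_compl] at hp hq
    grind
  · intro p hp
    apply sub_dvd_of_swap
    rw [rename_vdm, sgn_swap (hne p hp), neg_one_mul]

/-- The polynomial `Δ / ∏_{i ∈ I, j ∉ I} (x_i - x_j)`. -/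
noncomputable def cofactor {n : ℕ} (I : Finset (Fin n)) : MvPolynomial (Fin n) ℚ :=
  (denom_dvd_vdm I).choose

lemma vdm_eq {n : ℕ} (I : Finset (Fin n)) : vdm n = denom I * cofactor I :=
  (denom_dvd_vdm I).choose_spec

lemma denom_ne_zero {n : ℕ} (I : Finset (Fin n)) : denom I ≠ 0 :=
  fun h => vdm_ne_zero n (by rw [vdm_eq I, h, zero_mul])

open MvPolynomial in
lemma rename_denom {n : ℕ} (σ : Equiv.Perm (Fin n)) (I : Finset (Fin n)) :
    rename σ (denom I) = denom (I.map σ.toEmbedding) := by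
  have hc : (I.map σ.toEmbedding)ᶜ = Iᶜ.map σ.toEmbedding := by
    ext k
    simp [Finset.mem_map_equiv]
  simp [denom, hc, map_prod, Finset.prod_map]

open MvPolynomial in
lemma rename_cofactor {n : ℕ} (σ : Equiv.Perm (Fin n)) (I : Finset (Fin n)) :
    rename σ (cofactor I) = sgn σ * cofactor (I.map σ.toEmbedding) := by
  apply mul_left_cancel₀ (denom_ne_zero (I.map σ.toEmbedding))
  rw [mul_left_comm, ← vdm_eq, ← rename_denom, ← map_mul, ← vdm_eq, rename_vdm]

set_option maxHeartbeats 1000000 in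
/-- Let `P`, `Q` be symmetric polynomials in `a` resp. `b` variables. Then
`R = ∑_{I ⊔ J = {1,…,a+b}, #I = a, #J = b} P(x_I)·Q(x_J) / ∏_{i ∈ I, j ∈ J} (x_i − x_j)`,
an a priori rational function in `x_1, …, x_{a+b}`, is a symmetric polynomial. -/
theorem sum_ratio_is_symmetric_polynomial (a b : ℕ) (ha : 0 < a) (hb : 0 < b)
    (P : MvPolynomial (Fin a) ℚ) (hP : P.IsSymmetric)
    (Q : MvPolynomial (Fin b) ℚ) (hQ : Q.IsSymmetric) :
    ∃ S : MvPolynomial (Fin (a + b)) ℚ, S.IsSymmetric ∧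
      algebraMap (MvPolynomial (Fin (a + b)) ℚ) (FractionRing (MvPolynomial (Fin (a + b)) ℚ)) S
        = ∑ I ∈ (Finset.powersetCard a (Finset.univ : Finset (Fin (a + b)))).attach,
          (algebraMap (MvPolynomial (Fin (a + b)) ℚ)
              (FractionRing (MvPolynomial (Fin (a + b)) ℚ))
              (evalOnSubset (a + b) a I.1 ((Finset.mem_powersetCard.mp I.2).2) P)
            * algebraMap (MvPolynomial (Fin (a + b)) ℚ)
                (FractionRing (MvPolynomial (Fin (a + b)) ℚ))
                (evalOnSubset (a + b) b I.1ᶜ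
                  (by rw [Finset.card_compl, (Finset.mem_powersetCard.mp I.2).2,
                      Fintype.card_fin]; omega) Q))
          / ∏ i ∈ I.1, ∏ j ∈ I.1ᶜ,
              (algebraMap (MvPolynomial (Fin (a + b)) ℚ)
                  (FractionRing (MvPolynomial (Fin (a + b)) ℚ)) (MvPolynomial.X i)
                - algebraMap (MvPolynomial (Fin (a + b)) ℚ)
                    (FractionRing (MvPolynomial (Fin (a + b)) ℚ)) (MvPolynomial.X j)) := by
  classical
  have hcard : ∀ I : Finset (Fin (a + b)), I ∈ Finset.powersetCard a Finset.univ →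
      I.card = a := fun I hI => (Finset.mem_powersetCard.mp hI).2
  have hcardc : ∀ I : Finset (Fin (a + b)), I ∈ Finset.powersetCard a Finset.univ →
      Iᶜ.card = b := fun I hI => by
    rw [Finset.card_compl, hcard I hI, Fintype.card_fin]; omega
  have hmap : ∀ (σ : Equiv.Perm (Fin (a + b))) (I : Finset (Fin (a + b))),
      I ∈ Finset.powersetCard a Finset.univ →
      I.map σ.toEmbedding ∈ Finset.powersetCard a Finset.univ := fun σ I hI => by
    simp [Finset.mem_powersetCard, hcard I hI]
  -- `N` is `Δ R`, with each denominator cancelled against `Δ`.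
  let N : MvPolynomial (Fin (a + b)) ℚ :=
    ∑ I ∈ (Finset.powersetCard a (Finset.univ : Finset (Fin (a + b)))).attach,
      evalOnSubset (a + b) a I.1 (hcard _ I.2) P *
        evalOnSubset (a + b) b I.1ᶜ (hcardc _ I.2) Q * cofactor I.1
  have hN : ∀ σ : Equiv.Perm (Fin (a + b)), MvPolynomial.rename σ N = sgn σ * N := by
    intro σ
    rw [map_sum, Finset.mul_sum]
    refine Finset.sum_bij' (fun I _ => ⟨I.1.map σ.toEmbedding, hmap σ _ I.2⟩)
      (fun I _ => ⟨I.1.map σ.symm.toEmbedding, hmap σ.symm _ I.2⟩)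
      (fun _ _ => Finset.mem_attach _ _) (fun _ _ => Finset.mem_attach _ _) ?_ ?_ ?_
    · intro I _
      ext k
      simp [Finset.mem_map_equiv]
    · intro I _
      ext k
      simp [Finset.mem_map_equiv]
    · intro I _
      rw [map_mul, map_mul, rename_cofactor,
        rename_evalOnSubset σ I.1 (I.1.map σ.toEmbedding) _ (hcard _ (hmap σ _ I.2))
          (by simp) P hP,
        rename_evalOnSubset σ I.1ᶜ (I.1.map σ.toEmbedding)ᶜ _ (hcardc _ (hmap σ _ I.2))
          (by simp) Q hQ]
      ring
  obtain ⟨S, hS, hNS⟩ := exists_symmetric_of_alternating N hN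
  refine ⟨S, hS, ?_⟩
  have hinj := IsFractionRing.injective (MvPolynomial (Fin (a + b)) ℚ)
    (FractionRing (MvPolynomial (Fin (a + b)) ℚ))
  have hne : ∀ f : MvPolynomial (Fin (a + b)) ℚ, f ≠ 0 →
      algebraMap _ (FractionRing (MvPolynomial (Fin (a + b)) ℚ)) f ≠ 0 :=
    fun f hf => (map_ne_zero_iff _ hinj).2 hf
  apply mul_left_cancel₀ (hne _ (vdm_ne_zero (a + b)))
  rw [← map_mul, ← hNS, map_sum, Finset.mul_sum]
  refine Finset.sum_congr rfl fun I _ => ?_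
  simp only [← map_sub, ← map_prod]
  change _ = _ * (_ / algebraMap _ _ (denom I.1))
  have hd := hne _ (denom_ne_zero I.1)
  rw [vdm_eq I.1, map_mul, map_mul, map_mul]
  field_simp
end
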